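/- Let (P', λ') ∈ P_d × (0,1) with P' in general position. Then there exist ε > 0 and an integer k ≥ 1, N > 0 and C > 0 (depending only on ε) such that for every n > N, every itinerary i ∈ I_n^ε and every j ∈ {1, …, d}: Leb{(P,λ) ∈ Δ_ε : H(P,λ,i) lies within distance ρ_n of the line L_j(P)} ≤ C · n^{2(k+1)} · ρ_n^{1/k}, where ρ_n := 2 r_ε a_ε^n and L_j(P) is the line through the vertices v_j and v_{j+1} of P (indices mod d), and Leb denotes Lebesgue measure on ℂ^d × ℝ. -/

import Mathlib

open MeasureTheory Set Filter Metric

noncomputable section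

/-- Planar cross product of two complex numbers viewed as vectors of `ℝ²`. -/
def cross (z w : ℂ) : ℝ := z.re * w.im - z.im * w.re

/-- `v` is the tuple of vertices of a convex `d`-gon, cyclically ordered
(counterclockwise): every vertex lies strictly to the left of every directed edge. -/
def IsConvexPolygon {d : ℕ} [NeZero d] (v : Fin d → ℂ) : Prop :=
  ∀ i j : Fin d, j ≠ i → j ≠ i + 1 → 0 < cross (v (i + 1) - v i) (v j - v i)

/-- The polygon `P`, as a subset of the plane. -/
def polygonSet {d : ℕ} (v : Fin d → ℂ) : Set ℂ := convexHull ℝ (Set.range v)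

/-- The open cone `A k`: points `z` outside `P` whose supporting line (oriented from `z`
towards the polygon, with the interior of `P` on its left) meets `P` exactly at the
vertex `v k`. -/
def cone {d : ℕ} (v : Fin d → ℂ) (k : Fin d) : Set ℂ :=
  {z | ∀ j : Fin d, j ≠ k → 0 < cross (v k - z) (v j - z)}

/-- The singular set `S_P`: the points of `X = ℂ \ P` lying in no cone, i.e. whose
supporting line contains an edge of the polygon. -/
def singSet {d : ℕ} (v : Fin d → ℂ) : Set ℂ :=
  {z | z ∉ polygonSet v ∧ ∀ k : Fin d, z ∉ cone v k}

/-- The outer billiard map of the polygon with vertices `v` with contraction `lam`: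
on the cone `A k` it is `z ↦ -lam • z + (1+lam) • v k` (extended arbitrarily outside
the union of the cones, which is its actual domain `X \ S_P`). -/
def billiardMap {d : ℕ} (v : Fin d → ℂ) (lam : ℝ) (z : ℂ) : ℂ :=
  haveI := Classical.propDecidable (∃ k : Fin d, z ∈ cone v k)
  if h : ∃ k : Fin d, z ∈ cone v k then -(lam : ℂ) * z + (1 + (lam : ℂ)) * v h.choose
  else z

/-- A point is non-singular if its whole forward orbit stays in the union of the open
cones, i.e. never meets the singular set. -/
def NonSingular {d : ℕ} (v : Fin d → ℂ) (lam : ℝ) (z : ℂ) : Prop :=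
  ∀ n : ℕ, (billiardMap v lam)^[n] z ∈ ⋃ k : Fin d, cone v k

/-- The ω-limit set of the forward orbit of `z` under `f`. -/
def omegaSet (f : ℂ → ℂ) (z : ℂ) : Set ℂ :=
  ⋂ m : ℕ, closure ((fun n : ℕ => f^[n] z) '' {n | m ≤ n})

/-- The outer billiard map with contraction is asymptotically periodic: it has finitely
many periodic orbits (equivalently, periodic points) and the ω-limit set of every
non-singular point is a periodic orbit. -/
def AsymptoticallyPeriodic {d : ℕ} (v : Fin d → ℂ) (lam : ℝ) : Prop :=
  {z : ℂ | NonSingular v lam z ∧ ∃ p : ℕ, 1 ≤ p ∧ (billiardMap v lam)^[p] z = z}.Finite ∧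
  ∀ z : ℂ, NonSingular v lam z → ∃ w : ℂ, NonSingular v lam w ∧
    (∃ p : ℕ, 1 ≤ p ∧ (billiardMap v lam)^[p] w = w) ∧
    omegaSet (billiardMap v lam) z = Set.range fun n : ℕ => (billiardMap v lam)^[n] w

/-- The `ε`-neighbourhood `Δ_ε = B_ε(P') × (λ'-ε, λ'+ε)` of `(P', λ')`. -/
def Delta {d : ℕ} (v' : Fin d → ℂ) (l' ε : ℝ) : Set ((Fin d → ℂ) × ℝ) :=
  Metric.ball v' ε ×ˢ Set.Ioo (l' - ε) (l' + ε)

/-- `a_ε = λ' + ε`. -/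
def aEps (l' ε : ℝ) : ℝ := l' + ε

/-- `b_ε = sup {‖P‖ : P ∈ B_ε(P')}` (sup-norm of the vertex tuple). -/
def bEps {d : ℕ} (v' : Fin d → ℂ) (ε : ℝ) : ℝ :=
  sSup ((fun w : Fin d → ℂ => ‖w‖) '' Metric.ball v' ε)

/-- `r_ε = b_ε (1+a_ε)/(1-a_ε)²`. -/
def rEps {d : ℕ} (v' : Fin d → ℂ) (l' ε : ℝ) : ℝ :=
  bEps v' ε * (1 + aEps l' ε) / (1 - aEps l' ε) ^ 2

/-- `K_ε`: the closed disc of radius `r_ε` centred at the origin. -/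
def Keps {d : ℕ} (v' : Fin d → ℂ) (l' ε : ℝ) : Set ℂ :=
  Metric.closedBall (0 : ℂ) (rEps v' l' ε)

/-- `(i 0, …, i (n-1))` is an admissible itinerary of order `n` of `T_{w,lam}`, the
cones being restricted to `K_ε`: the corresponding intersection
`A_{i_0} ∩ T⁻¹(A_{i_1}) ∩ ⋯ ∩ T^{-(n-1)}(A_{i_{n-1}})` is non-empty. -/
def Admissible {d : ℕ} (v' : Fin d → ℂ) (l' ε : ℝ) (w : Fin d → ℂ) (lam : ℝ)
    {n : ℕ} (i : Fin n → Fin d) : Prop :=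
  ∃ z : ℂ, ∀ j : Fin n, (billiardMap w lam)^[(j : ℕ)] z ∈ cone w (i j) ∩ Keps v' l' ε

/-- `I_n^ε`: the itineraries of order `n` admissible for some `(P, λ) ∈ Δ_ε`. -/
def ItinSet {d : ℕ} (v' : Fin d → ℂ) (l' ε : ℝ) (n : ℕ) : Set (Fin n → Fin d) :=
  {i | ∃ q ∈ Delta v' l' ε, Admissible v' l' ε q.1 q.2 i}

/-- `H(P, λ, i) = (1+λ) ∑_{j=0}^{n-1} (-λ)^{n-j-1} v_{i_j}`. -/
def Hpt {d : ℕ} (w : Fin d → ℂ) (lam : ℝ) {n : ℕ} (i : Fin n → Fin d) : ℂ :=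
  (1 + (lam : ℂ)) * ∑ j : Fin n, (-(lam : ℂ)) ^ (n - (j : ℕ) - 1) * w (i j)

/-- The limit set `Λ_ε(P,λ) = ⋂_{m ≥ 1} closure (⋃_{n ≥ m} {H(P,λ,i) : i ∈ I_n^ε})`. -/
def LamSet {d : ℕ} (v' : Fin d → ℂ) (l' ε : ℝ) (w : Fin d → ℂ) (lam : ℝ) : Set ℂ :=
  ⋂ m : ℕ, ⋂ (_ : 1 ≤ m),
    closure {z : ℂ | ∃ n : ℕ, m ≤ n ∧ ∃ i ∈ ItinSet v' l' ε n, Hpt w lam i = z}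

/-- `ω(P,λ)`: the union of the ω-limit sets of all non-singular points. -/
def omegaUnion {d : ℕ} (w : Fin d → ℂ) (lam : ℝ) : Set ℂ :=
  ⋃ z : ℂ, ⋃ (_ : NonSingular w lam z), omegaSet (billiardMap w lam) z

/-- `P` is in general position: every pair of distinct lines extending sides and
diagonals of `P` (i.e. lines through two distinct vertices) meets in exactly one point. -/
def GeneralPosition {d : ℕ} (v : Fin d → ℂ) : Prop :=
  ∀ i j k l : Fin d, v i ≠ v j → v k ≠ v l →
    affineSpan ℝ ({v i, v j} : Set ℂ) ≠ affineSpan ℝ ({v k, v l} : Set ℂ) →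
    ∃! z : ℂ, z ∈ affineSpan ℝ ({v i, v j} : Set ℂ) ∧
      z ∈ affineSpan ℝ ({v k, v l} : Set ℂ)

/-!
While an orbit alternates between the cones of `v j` and `v (j + 1)`, every second step brings it
closer, by a definite amount, to the line through `v j` and any third vertex, without letting it
cross that line. So every `S` consecutive steps, for a suitable constant `S`, visit another cone.
Hence, for some vertex `m` off the edge, the coefficient of `v m` in `H(P, λ, i)` is `1 + λ` times
a polynomial in `λ` with coefficients in `{0, 1, -1}`, one of which, of index at most `S`, is
nonzero.

Such a polynomial is smaller than `η` only on a set of `λ` of measure `O(η ^ (1 / k))`, uniformly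
in `n`: by Jensen's formula, and Lagrange interpolation, an analytic function on a disc that is
bounded on the boundary and not small at the centre cannot be tiny at more than `k` separated
points. For the other `λ`, moving the vertex `v m` alone translates `H(P, λ, i)` by at least `η`
times the displacement and does not move the edge, so the polygons with `H(P, λ, i)` within `ρ` of
the line form a set of measure `O(ρ / η)`. The choice `η = ρ ^ (k / (k + 1))` balances the two
contributions.
-/

/-! ### Sublevel sets of analytic functions -/

lemma one_le_divisor_of_eq_zero {f : ℂ → ℂ} {U : Set ℂ} {c z : ℂ} (hf : AnalyticOnNhd ℂ f U)
    (hU : IsPreconnected U) (hc : c ∈ U) (hfc : f c ≠ 0) (hz : z ∈ U) (hfz : f z = 0) :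
    1 ≤ MeromorphicOn.divisor f U z := by
  have hc_order : analyticOrderAt f c ≠ ⊤ := by
    simp [(hf c hc).analyticOrderAt_eq_zero.mpr hfc]
  have hz_order : analyticOrderAt f z ≠ ⊤ :=
    hf.analyticOrderAt_ne_top_of_isPreconnected hU hc hz hc_order
  rw [MeromorphicOn.AnalyticOnNhd.divisor_apply hf hz]
  lift analyticOrderAt f z to ℕ using hz_order with n hn
  have hn0 : n ≠ 0 := by
    rintro rfl
    exact (hf z hz).analyticOrderAt_eq_zero.mp hn.symm hfz
  change (1 : ℤ) ≤ n
  omega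

lemma card_le_finsum_divisor {f : ℂ → ℂ} {U : Set ℂ} {c : ℂ} (hf : AnalyticOnNhd ℂ f U)
    (hU : IsPreconnected U) (hUc : IsCompact U) (hc : c ∈ U) (hfc : f c ≠ 0)
    {s : Finset ℂ} (hs : ∀ z ∈ s, z ∈ U ∧ f z = 0) :
    (s.card : ℤ) ≤ ∑ᶠ z, MeromorphicOn.divisor f U z := by
  have hfin := (MeromorphicOn.divisor f U).finiteSupport hUc
  have hone : ∀ z ∈ s, 1 ≤ MeromorphicOn.divisor f U z := fun z hz ↦
    one_le_divisor_of_eq_zero hf hU hc hfc (hs z hz).1 (hs z hz).2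
  have hsub : s ⊆ hfin.toFinset := fun z hz ↦ by
    have := hone z hz
    simp only [Finite.mem_toFinset, Function.mem_support]
    omega
  rw [finsum_eq_sum_of_support_subset _ hfin.coe_toFinset.ge]
  calc (s.card : ℤ) = ∑ z ∈ s, 1 := by simp
    _ ≤ ∑ z ∈ s, MeromorphicOn.divisor f U z := Finset.sum_le_sum hone
    _ ≤ _ := Finset.sum_le_sum_of_subset_of_nonneg hsub fun z _ _ ↦
      MeromorphicOn.AnalyticOnNhd.divisor_nonneg hf z

lemma norm_center_le_of_zeros {f : ℂ → ℂ} {c : ℂ} {a R M : ℝ} (ha : 0 < a) (haR : a < R)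
    (hM : 0 < M) (hf : AnalyticOnNhd ℂ f (closedBall c R)) (hfM : ∀ z ∈ sphere c R, ‖f z‖ ≤ M)
    {s : Finset ℂ} (hs : ∀ z ∈ s, z ∈ closedBall c a ∧ f z = 0) :
    ‖f c‖ ≤ (a / R) ^ s.card * M := by
  have hR : 0 < R := ha.trans haR
  rcases eq_or_ne (f c) 0 with hfc | hfc
  · rw [hfc, norm_zero]
    positivity
  set g : ℂ → ℂ := fun z ↦ (M : ℂ)⁻¹ * f z with hg
  have hM' : (M : ℂ) ≠ 0 := by exact_mod_cast hM.ne'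
  have hgc : g c ≠ 0 := mul_ne_zero (inv_ne_zero hM') hfc
  have hnorm (z : ℂ) : ‖g z‖ = M⁻¹ * ‖f z‖ := by simp [hg, abs_of_pos hM]
  have hga : AnalyticOnNhd ℂ g (closedBall c R) := analyticOnNhd_const.mul hf
  have hcount : (s.card : ℤ) ≤ ∑ᶠ z, MeromorphicOn.divisor g (closedBall c a) z :=
    card_le_finsum_divisor (hga.mono (closedBall_subset_closedBall haR.le))
      (convex_closedBall c a).isPreconnected (isCompact_closedBall c a)
      (mem_closedBall_self ha.le) hgc fun z hz ↦ ⟨(hs z hz).1, by simp [hg, (hs z hz).2]⟩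
  have hjensen := AnalyticOnNhd.sum_divisor_le (c := c) (r := a) (R := R) (M := 1) (f := g)
    (by rwa [abs_of_pos ha]) (by rwa [abs_of_pos ha, abs_of_pos hR]) le_rfl
    (by rwa [abs_of_pos hR]) hgc fun z hz ↦ by
      rw [hnorm, inv_mul_le_one₀ hM]
      exact hfM z (by rwa [abs_of_pos hR] at hz)
  rw [abs_of_pos ha] at hjensen
  have hlog : s.card * Real.log (R / a) ≤ Real.log (1 / ‖g c‖) := by
    rw [← le_div_iff₀ (Real.log_pos ((one_lt_div ha).mpr haR))]
    exact le_trans (by exact_mod_cast hcount) hjensen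
  have hgpos : 0 < ‖g c‖ := norm_pos_iff.mpr hgc
  rw [← Real.log_pow, Real.log_le_log_iff (by positivity) (by positivity), le_div_iff₀ hgpos,
    hnorm, ← div_eq_inv_mul, mul_div_assoc', div_le_one hM] at hlog
  calc ‖f c‖ = (a / R) ^ s.card * ((R / a) ^ s.card * ‖f c‖) := by
        rw [← mul_assoc, ← mul_pow, div_mul_div_cancel₀ hR.ne', div_self ha.ne', one_pow, one_mul]
    _ ≤ (a / R) ^ s.card * M := by gcongr

lemma norm_eval_interpolate_le {𝕜 ι : Type*} [NormedField 𝕜] [DecidableEq ι] {s : Finset ι}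
    {v r : ι → 𝕜} {z : 𝕜} {δ D η : ℝ} (hδ : 0 < δ)
    (hsep : ∀ x ∈ s, ∀ y ∈ s, x ≠ y → δ ≤ ‖v x - v y‖) (hz : ∀ x ∈ s, ‖z - v x‖ ≤ D)
    (hr : ∀ x ∈ s, ‖r x‖ ≤ η) :
    ‖(Lagrange.interpolate s v r).eval z‖ ≤ s.card * (η * (D / δ) ^ (s.card - 1)) := by
  rw [Lagrange.interpolate_apply, Polynomial.eval_finsetSum, ← nsmul_eq_mul]
  refine (norm_sum_le _ _).trans (Finset.sum_le_card_nsmul _ _ _ fun x hx ↦ ?_)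
  rw [Polynomial.eval_mul, Polynomial.eval_C, norm_mul, Lagrange.basis, Polynomial.eval_prod,
    norm_prod]
  have hbasis : ∏ y ∈ s.erase x, ‖(Lagrange.basisDivisor (v x) (v y)).eval z‖ ≤
      (D / δ) ^ (s.card - 1) := by
    rw [← Finset.card_erase_of_mem hx, ← Finset.prod_const]
    refine Finset.prod_le_prod (fun _ _ ↦ norm_nonneg _) fun y hy ↦ ?_
    obtain ⟨hyx, hy⟩ := Finset.mem_erase.mp hy
    have hD : 0 ≤ D := (norm_nonneg _).trans (hz y hy)
    simp only [Lagrange.basisDivisor, Polynomial.eval_mul, Polynomial.eval_C, Polynomial.eval_sub,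
      Polynomial.eval_X, norm_mul, norm_inv]
    rw [← div_eq_inv_mul]
    exact div_le_div₀ hD (hz y hy) hδ (hsep x hx y hy hyx.symm)
  exact mul_le_mul (hr x hx) hbasis (Finset.prod_nonneg fun _ _ ↦ norm_nonneg _)
    ((norm_nonneg _).trans (hr x hx))

-- Jensen's bound is applied to `f` minus its Lagrange interpolant at the points of `s`.
lemma norm_center_le_of_small_values {f : ℂ → ℂ} {c : ℂ} {a R M δ η : ℝ} (ha : 0 < a) (haR : a < R)
    (hM : 0 < M) (hf : AnalyticOnNhd ℂ f (closedBall c R)) (hfM : ∀ z ∈ sphere c R, ‖f z‖ ≤ M)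
    (hδ : 0 < δ) (hη : 0 ≤ η) {s : Finset ℂ} (hs : ∀ z ∈ s, z ∈ closedBall c a ∧ ‖f z‖ ≤ η)
    (hsep : ∀ x ∈ s, ∀ y ∈ s, x ≠ y → δ ≤ ‖x - y‖) :
    let W := s.card * (η * (2 * R / δ) ^ (s.card - 1))
    ‖f c‖ ≤ (a / R) ^ s.card * (M + W) + W := by
  intro W
  have hR : 0 < R := ha.trans haR
  have hW : 0 ≤ W := by positivity
  set p := Lagrange.interpolate s id f with hp
  have hpW : ∀ z ∈ closedBall c R, ‖p.eval z‖ ≤ W := fun z hz ↦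
    norm_eval_interpolate_le hδ hsep (fun x hx ↦ by
      have hx := (hs x hx).1
      rw [mem_closedBall, dist_eq_norm] at hz hx
      calc ‖z - x‖ = ‖(z - c) - (x - c)‖ := by ring_nf
        _ ≤ ‖z - c‖ + ‖x - c‖ := norm_sub_le _ _
        _ ≤ 2 * R := by linarith) fun x hx ↦ (hs x hx).2
  have hdiff : ‖f c - p.eval c‖ ≤ (a / R) ^ s.card * (M + W) := by
    refine norm_center_le_of_zeros (f := fun z ↦ f z - p.eval z) ha haR (by positivity)
      (hf.sub fun z _ ↦ AnalyticAt.aeval_polynomial analyticAt_id p) (fun z hz ↦ ?_)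
      fun z hz ↦ ⟨(hs z hz).1, ?_⟩
    · exact (norm_sub_le _ _).trans
        (add_le_add (hfM z hz) (hpW z (sphere_subset_closedBall hz)))
    · rw [sub_eq_zero, hp]
      exact (Lagrange.eval_interpolate_at_node f Function.injective_id.injOn hz).symm
  calc ‖f c‖ = ‖(f c - p.eval c) + p.eval c‖ := by rw [sub_add_cancel]
    _ ≤ ‖f c - p.eval c‖ + ‖p.eval c‖ := norm_add_le _ _
    _ ≤ _ := add_le_add hdiff (hpW c (mem_closedBall_self hR.le))

lemma exists_finset_of_lt_packingNumber {X : Type*} [PseudoMetricSpace X] {δ : NNReal} {E : Set X}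
    {m : ℕ} (h : m < packingNumber δ E) :
    ∃ s : Finset X, ↑s ⊆ E ∧ s.card = m + 1 ∧ IsSeparated δ (s : Set X) := by
  simp only [packingNumber, lt_iSup_iff] at h
  obtain ⟨C, hCE, hC, hmC⟩ := h
  obtain ⟨s, hsC, hs⟩ := exists_subset_encard_eq (k := (m + 1 : ℕ))
    (by simpa using Order.add_one_le_of_lt hmC)
  have hfin : s.Finite := finite_of_encard_eq_coe hs
  refine ⟨hfin.toFinset, ?_, ?_, ?_⟩
  · simpa using hsC.trans hCE
  · rw [← ncard_eq_toFinset_card s hfin, ncard, hs, ENat.toNat_natCast]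
  · rw [hfin.coe_toFinset]
    exact hC.subset hsC

lemma measure_le_of_packingNumber_le {X : Type*} [PseudoMetricSpace X] [MeasurableSpace X]
    {μ : Measure X} {δ : NNReal} {E : Set X} {m : ℕ} {c : ENNReal} (h : packingNumber δ E ≤ m)
    (hc : ∀ x, μ (closedBall x δ) ≤ c) : μ E ≤ m * c := by
  have htop : packingNumber δ E ≠ ⊤ := ne_top_of_le_ne_top (ENat.natCast_ne_top m) h
  set s := maximalSeparatedSet δ E
  have hs : s.encard ≤ m := (encard_maximalSeparatedSet htop).trans_le h
  have hfin : s.Finite := finite_of_encard_le_coe hs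
  have hcard : hfin.toFinset.card ≤ m := by
    rwa [hfin.encard_eq_coe_toFinset_card, Nat.cast_le] at hs
  have hcover : E ⊆ ⋃ x ∈ hfin.toFinset, closedBall x δ := by
    simpa using isCover_iff_subset_iUnion_closedBall.mp (isCover_maximalSeparatedSet htop)
  calc μ E ≤ ∑ x ∈ hfin.toFinset, μ (closedBall x δ) :=
        (measure_mono hcover).trans (measure_biUnion_finset_le _ _)
    _ ≤ hfin.toFinset.card • c := Finset.sum_le_card_nsmul _ _ _ fun x _ ↦ hc x
    _ ≤ m * c := by
      rw [nsmul_eq_mul]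
      gcongr

lemma exists_packing_exponent {a R : ℝ} (ha : 0 < a) (haR : a < R) (M : ℝ) :
    ∃ m : ℕ, 1 ≤ m ∧ (a / R) ^ (m + 1) * M ≤ 1 / 4 := by
  have hlim : Tendsto (fun m : ℕ ↦ (a / R) ^ (m + 1) * M) atTop (nhds 0) := by
    have hpow := tendsto_pow_atTop_nhds_zero_of_lt_one (div_nonneg ha.le (ha.trans haR).le)
      ((div_lt_one (ha.trans haR)).mpr haR)
    simpa using ((tendsto_add_atTop_iff_nat 1).mpr hpow).mul_const M
  have hquarter := hlim.eventually_le_const (show (0 : ℝ) < 1 / 4 by norm_num)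
  obtain ⟨m, hm, hm1⟩ := (hquarter.and (eventually_ge_atTop 1)).exists
  exact ⟨m, hm1, hm⟩

-- `δ` is chosen so that the interpolant of values of size `η` at `m + 1` separated points is at
-- most `1 / 4` on the disc of radius `R`.
lemma packingNumber_sublevel_le {f : ℂ → ℂ} {c : ℂ} {a R M η : ℝ} {m : ℕ} (ha : 0 < a)
    (haR : a < R) (hM : 0 < M) (hm : 1 ≤ m) (hmM : (a / R) ^ (m + 1) * M ≤ 1 / 4)
    (hf : AnalyticOnNhd ℂ f (closedBall c R)) (hfM : ∀ z ∈ sphere c R, ‖f z‖ ≤ M)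
    (hfc : 1 ≤ ‖f c‖) (hη : 0 < η) :
    packingNumber (2 * R * (4 * (m + 1) * η) ^ (m : ℝ)⁻¹).toNNReal
      {z ∈ closedBall c a | ‖f z‖ ≤ η} ≤ m := by
  have hR : 0 < R := ha.trans haR
  set δ := 2 * R * (4 * (m + 1) * η) ^ (m : ℝ)⁻¹ with hδ_def
  have hδ : 0 < δ := by positivity
  by_contra! hpack
  obtain ⟨s, hs, hcard, hsep⟩ := exists_finset_of_lt_packingNumber hpack
  have hsep' : ∀ x ∈ s, ∀ y ∈ s, x ≠ y → δ ≤ ‖x - y‖ := fun x hx y hy hxy ↦ by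
    have : ENNReal.ofReal δ < edist x y := hsep hx hy hxy
    rw [edist_dist, dist_eq_norm] at this
    exact (ENNReal.ofReal_lt_ofReal_iff_of_nonneg hδ.le).mp this |>.le
  have hW : ((m + 1 : ℕ) : ℝ) * (η * (2 * R / δ) ^ m) = 1 / 4 := by
    have hpow : (2 * R / δ) ^ m = (4 * (m + 1) * η)⁻¹ := by
      rw [hδ_def, div_mul_cancel_left₀ (by positivity), inv_pow,
        Real.rpow_inv_natCast_pow (by positivity) (by omega)]
    rw [hpow]
    push_cast
    field_simp
  have hbound := norm_center_le_of_small_values ha haR hM hf hfM hδ hη.le (fun z hz ↦ hs hz) hsep'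
  rw [hcard, Nat.add_sub_cancel, hW] at hbound
  have hratio : (a / R) ^ (m + 1) ≤ 1 :=
    pow_le_one₀ (div_nonneg ha.le hR.le) ((div_le_one hR).mpr haR.le)
  linarith [mul_add ((a / R) ^ (m + 1)) M (1 / 4)]

lemma packingNumber_preimage_le {X Y : Type*} [EMetricSpace X] [PseudoEMetricSpace Y] {g : X → Y}
    (hg : Isometry g) (δ : NNReal) (E : Set Y) :
    packingNumber δ (g ⁻¹' E) ≤ packingNumber δ E := by
  refine iSup₂_le fun C hC ↦ iSup_le fun hsep ↦ ?_
  rw [← hg.injective.encard_image]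
  refine IsSeparated.encard_le_packingNumber (image_subset_iff.mpr hC) ?_
  rintro _ ⟨x, hx, rfl⟩ _ ⟨y, hy, rfl⟩ hxy
  rw [hg.edist_eq]
  exact hsep hx hy fun h ↦ hxy (congrArg g h)

theorem exists_volume_sublevel_le {a R M : ℝ} (ha : 0 < a) (haR : a < R) (hM : 0 < M) :
    ∃ k : ℕ, 1 ≤ k ∧ ∃ C : ℝ, 0 < C ∧ ∀ f : ℂ → ℂ, ∀ c : ℂ,
      AnalyticOnNhd ℂ f (closedBall c R) → (∀ z ∈ sphere c R, ‖f z‖ ≤ M) → 1 ≤ ‖f c‖ →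
      ∀ η > 0, volume {x : ℝ | (x : ℂ) ∈ closedBall c a ∧ ‖f x‖ ≤ η} ≤
        ENNReal.ofReal (C * η ^ (k : ℝ)⁻¹) := by
  obtain ⟨k, hk, hkM⟩ := exists_packing_exponent ha haR M
  have hR : 0 < R := ha.trans haR
  refine ⟨k, hk, k * (2 * (2 * R * (4 * (k + 1)) ^ (k : ℝ)⁻¹)), by positivity,
    fun f c hf hfM hfc η hη ↦ ?_⟩
  set δ := 2 * R * (4 * (k + 1) * η) ^ (k : ℝ)⁻¹ with hδ
  have hpack : packingNumber δ.toNNReal {x : ℝ | (x : ℂ) ∈ closedBall c a ∧ ‖f x‖ ≤ η} ≤ k :=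
    (packingNumber_preimage_le Complex.isometry_ofReal _ _).trans
      (packingNumber_sublevel_le ha haR hM hk hkM hf hfM hfc hη)
  refine (measure_le_of_packingNumber_le (c := ENNReal.ofReal (2 * δ)) hpack fun x ↦ ?_).trans_eq ?_
  · rw [Real.volume_closedBall, Real.coe_toNNReal δ (by positivity)]
  · rw [← ENNReal.ofReal_natCast, ← ENNReal.ofReal_mul (by positivity), hδ,
      Real.mul_rpow (by positivity) hη.le]
    ring_nf

lemma norm_aeval_le_geometric {p : Polynomial ℤ} {B R : ℝ} {z : ℂ}
    (hp : ∀ s, |(p.coeff s : ℝ)| ≤ B) (hz : ‖z‖ ≤ R) (hR : R < 1) :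
    ‖Polynomial.aeval z p‖ ≤ B * (1 - R)⁻¹ := by
  have hR0 : 0 ≤ R := (norm_nonneg z).trans hz
  have hB : 0 ≤ B := (abs_nonneg _).trans (hp 0)
  rw [Polynomial.aeval_eq_sum_range]
  calc ‖∑ s ∈ Finset.range (p.natDegree + 1), p.coeff s • z ^ s‖
      ≤ ∑ s ∈ Finset.range (p.natDegree + 1), B * R ^ s := by
        refine norm_sum_le_of_le _ fun s _ ↦ ?_
        rw [zsmul_eq_mul, norm_mul, norm_pow, Complex.norm_intCast]
        gcongr
        exact hp s
    _ = B * ∑ s ∈ Finset.range (p.natDegree + 1), R ^ s := (Finset.mul_sum _ _ _).symm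
    _ ≤ B * (1 - R)⁻¹ := by
        gcongr
        rw [← tsum_geometric_of_lt_one hR0 hR]
        exact (summable_geometric_of_lt_one hR0 hR).sum_le_tsum _ fun s _ ↦ by positivity

lemma exists_volume_sublevel_le_of_coeff_zero_ne_zero {a B : ℝ} (ha : 0 < a) (ha1 : a < 1)
    (hB : 0 < B) :
    ∃ k : ℕ, 1 ≤ k ∧ ∃ C : ℝ, 0 < C ∧ ∀ p : Polynomial ℤ, (∀ s, |(p.coeff s : ℝ)| ≤ B) →
      p.coeff 0 ≠ 0 → ∀ η > 0,
        volume {x : ℝ | |x| ≤ a ∧ |Polynomial.aeval x p| ≤ η} ≤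
          ENNReal.ofReal (C * η ^ (k : ℝ)⁻¹) := by
  have haR : a < (1 + a) / 2 := by linarith
  have hR : (1 + a) / 2 < 1 := by linarith
  obtain ⟨k, hk, C, hC, h⟩ := exists_volume_sublevel_le ha haR
    (mul_pos hB (inv_pos.mpr (sub_pos.mpr hR)))
  refine ⟨k, hk, C, hC, fun p hp hp0 η hη ↦ ?_⟩
  have hcenter : (1 : ℝ) ≤ ‖Polynomial.aeval (0 : ℂ) p‖ := by
    rw [← Polynomial.coeff_zero_eq_aeval_zero', eq_intCast, Complex.norm_intCast]
    exact_mod_cast Int.one_le_abs hp0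
  refine (measure_mono fun x hx ↦ ?_).trans (h (fun z ↦ Polynomial.aeval z p) 0
    (fun z _ ↦ AnalyticAt.aeval_polynomial analyticAt_id p)
    (fun z hz ↦ norm_aeval_le_geometric hp (mem_sphere_zero_iff_norm.mp hz).le hR) hcenter η hη)
  have hreal : Polynomial.aeval (x : ℂ) p = ((Polynomial.aeval x p : ℝ) : ℂ) :=
    Polynomial.aeval_algebraMap_apply ℂ x p
  simpa [hreal] using hx

lemma exists_eq_X_pow_mul {R : Type*} [CommSemiring R] {p : Polynomial R} (hp : p ≠ 0) :
    ∃ q : Polynomial R, p = Polynomial.X ^ p.natTrailingDegree * q ∧ q.coeff 0 ≠ 0 := by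
  obtain ⟨q, hq⟩ := Polynomial.X_pow_dvd_iff.mpr fun s hs ↦
    Polynomial.coeff_eq_zero_of_lt_natTrailingDegree (p := p) hs
  refine ⟨q, hq, ?_⟩
  have hcoeff := Polynomial.coeff_X_pow_mul q p.natTrailingDegree 0
  rw [← hq, zero_add] at hcoeff
  rw [← hcoeff]
  exact Polynomial.trailingCoeff_nonzero_iff_nonzero.mpr hp

-- The power of `X` dividing `p` is bounded below on `(l, a)`; the cofactor has a nonzero integer
-- as its value at `0`.
theorem exists_volume_polynomial_sublevel_le {l a B : ℝ} (hl : 0 < l) (hla : l < a) (ha1 : a < 1)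
    (hB : 0 < B) (S : ℕ) :
    ∃ k : ℕ, 1 ≤ k ∧ ∃ C : ℝ, 0 < C ∧ ∀ p : Polynomial ℤ, (∀ s, |(p.coeff s : ℝ)| ≤ B) →
      (∃ s ≤ S, p.coeff s ≠ 0) → ∀ η > 0,
        volume {x ∈ Ioo l a | |Polynomial.aeval x p| ≤ η} ≤
          ENNReal.ofReal (C * η ^ (k : ℝ)⁻¹) := by
  obtain ⟨k, hk, C, hC, h⟩ :=
    exists_volume_sublevel_le_of_coeff_zero_ne_zero (hl.trans hla) ha1 hB
  refine ⟨k, hk, C * ((l ^ S)⁻¹) ^ (k : ℝ)⁻¹, by positivity, fun p hp ⟨s, hsS, hs⟩ η hη ↦ ?_⟩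
  obtain ⟨q, hpq, hq0⟩ := exists_eq_X_pow_mul (p := p) fun h0 ↦ hs (by simp [h0])
  set t := p.natTrailingDegree
  have htS : t ≤ S := (Polynomial.natTrailingDegree_le_of_ne_zero hs).trans hsS
  have hq : ∀ s, |(q.coeff s : ℝ)| ≤ B := fun s ↦ by
    have hcoeff : q.coeff s = p.coeff (s + t) := by rw [hpq, Polynomial.coeff_X_pow_mul]
    exact hcoeff ▸ hp (s + t)
  rw [mul_assoc, ← Real.mul_rpow (by positivity) hη.le]
  refine (measure_mono fun x hx ↦ ?_).trans (h q hq hq0 ((l ^ S)⁻¹ * η) (by positivity))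
  obtain ⟨⟨hlx, hxa⟩, hxη⟩ := hx
  have hx0 : 0 < x := hl.trans hlx
  refine ⟨by rw [abs_of_pos hx0]; exact hxa.le, ?_⟩
  rw [hpq, map_mul, map_pow, Polynomial.aeval_X, abs_mul, abs_of_pos (pow_pos hx0 t)] at hxη
  have hpow : l ^ S ≤ x ^ t :=
    calc l ^ S ≤ l ^ t := pow_le_pow_of_le_one hl.le (hla.trans ha1).le htS
      _ ≤ x ^ t := by gcongr
  rw [le_inv_mul_iff₀ (pow_pos hl S)]
  exact (mul_le_mul_of_nonneg_right hpow (abs_nonneg _)).trans hxη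

/-! ### Escape from a pair of cones -/

lemma cross_add_right (a z w : ℂ) : cross a (z + w) = cross a z + cross a w := by
  simp only [cross, Complex.add_re, Complex.add_im]
  ring

lemma cross_ofReal_mul_right (a z : ℂ) (x : ℝ) : cross a (x * z) = x * cross a z := by
  simp only [cross, Complex.re_ofReal_mul, Complex.im_ofReal_mul]
  ring

lemma cross_comm (z w : ℂ) : cross z w = -cross w z := by
  simp only [cross]
  ring

lemma cross_eq_im (z w : ℂ) : cross z w = ((starRingEnd ℂ) z * w).im := by
  simp only [cross, Complex.mul_im, Complex.conj_re, Complex.conj_im]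
  ring

lemma abs_cross_le (z w : ℂ) : |cross z w| ≤ ‖z‖ * ‖w‖ := by
  rw [cross_eq_im]
  exact (Complex.abs_im_le_norm _).trans_eq (by rw [norm_mul, Complex.norm_conj])

section Cones

variable {d : ℕ} {v : Fin d → ℂ} {lam : ℝ} {j j' k l q : Fin d} {z : ℂ}

lemma mem_cone_iff : z ∈ cone v k ↔ ∀ j ≠ k, 0 < cross (v j - v k) (z - v k) := by
  have hcross (j : Fin d) : cross (v k - z) (v j - z) = cross (v j - v k) (z - v k) := by
    simp only [cross, Complex.sub_re, Complex.sub_im]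
    ring
  simp only [cone, mem_ofPred_eq, hcross]

lemma cone_index_unique (hk : z ∈ cone v k) (hl : z ∈ cone v l) : k = l := by
  by_contra h
  have hkl := hk l (Ne.symm h)
  rw [cross_comm] at hkl
  exact lt_asymm (hl k h) (neg_pos.mp hkl)

lemma billiardMap_of_mem_cone (hz : z ∈ cone v k) :
    billiardMap v lam z = -(lam : ℂ) * z + (1 + (lam : ℂ)) * v k := by
  have h : ∃ k, z ∈ cone v k := ⟨k, hz⟩
  rw [billiardMap, dif_pos h, cone_index_unique h.choose_spec hz]

lemma billiardMap_notMem_cone (hlam : 0 ≤ lam) (hjk : j ≠ k) (hz : z ∈ cone v k) :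
    billiardMap v lam z ∉ cone v k := fun hT ↦ by
  have hsub : billiardMap v lam z - v k = (-lam : ℝ) * (z - v k) := by
    rw [billiardMap_of_mem_cone hz]
    push_cast
    ring
  have hpos := mem_cone_iff.mp hT j hjk
  rw [hsub, cross_ofReal_mul_right] at hpos
  nlinarith [mem_cone_iff.mp hz j hjk]

lemma billiardMap_billiardMap_sub (hz : z ∈ cone v j) (hT : billiardMap v lam z ∈ cone v j') :
    billiardMap v lam (billiardMap v lam z) - v j =
      (lam ^ 2 : ℝ) * (z - v j) + (1 + lam : ℝ) * (v j' - v j) := by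
  rw [billiardMap_of_mem_cone hT, billiardMap_of_mem_cone hz]
  push_cast
  ring

lemma cross_billiardMap_billiardMap_le {c : ℝ} (h0 : 0 ≤ lam) (h1 : lam ≤ 1) (hc : 0 ≤ c)
    (hqj : q ≠ j) (hcq : c ≤ cross (v j' - v j) (v q - v j)) (hz : z ∈ cone v j)
    (hT : billiardMap v lam z ∈ cone v j') :
    cross (v q - v j) (billiardMap v lam (billiardMap v lam z) - v j) ≤
      cross (v q - v j) (z - v j) - c := by
  have hpos := mem_cone_iff.mp hz q hqj
  have hsq : lam ^ 2 ≤ 1 := pow_le_one₀ h0 h1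
  rw [billiardMap_billiardMap_sub hz hT, cross_add_right, cross_ofReal_mul_right,
    cross_ofReal_mul_right, cross_comm (v q - v j) (v j' - v j)]
  nlinarith

lemma nat_mul_lt_cross_of_forall_mem_cones {c : ℝ} {m : ℕ} (h0 : 0 ≤ lam) (h1 : lam ≤ 1)
    (hc : 0 ≤ c) (hjj' : j' ≠ j) (hqj : q ≠ j) (hcq : c ≤ cross (v j' - v j) (v q - v j))
    (hz : z ∈ cone v j)
    (hstay : ∀ t ≤ 2 * m, (billiardMap v lam)^[t] z ∈ cone v j ∪ cone v j') :
    m * c < cross (v q - v j) (z - v j) := by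
  set T := billiardMap v lam
  have hdescent : ∀ p ≤ m, T^[2 * p] z ∈ cone v j ∧
      cross (v q - v j) (T^[2 * p] z - v j) ≤ cross (v q - v j) (z - v j) - p * c := by
    intro p hp
    induction p with
    | zero => exact ⟨hz, by simp⟩
    | succ p ih =>
      obtain ⟨hcone, hle⟩ := ih (by omega)
      have hnext : T^[2 * p + 1] z = T (T^[2 * p] z) := Function.iterate_succ_apply' ..
      have hnext' : T^[2 * (p + 1)] z = T (T (T^[2 * p] z)) := by
        rw [← hnext]
        exact Function.iterate_succ_apply' ..
      have hT : T (T^[2 * p] z) ∈ cone v j' :=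
        hnext ▸ (hstay (2 * p + 1) (by omega)).resolve_left
          (hnext ▸ billiardMap_notMem_cone h0 hjj' hcone)
      have hTT : T (T (T^[2 * p] z)) ∈ cone v j :=
        hnext' ▸ (hstay (2 * (p + 1)) (by omega)).resolve_right
          (hnext' ▸ billiardMap_notMem_cone h0 hjj'.symm hT)
      have hdrop := cross_billiardMap_billiardMap_le h0 h1 hc hqj hcq hcone hT
      rw [hnext']
      refine ⟨hTT, ?_⟩
      push_cast
      linarith
  obtain ⟨hcone, hle⟩ := hdescent m le_rfl
  linarith [mem_cone_iff.mp hcone q hqj]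

lemma exists_iterate_notMem_cones {c : ℝ} {m : ℕ} (h0 : 0 ≤ lam) (h1 : lam ≤ 1) (hc : 0 ≤ c)
    (hjj' : j' ≠ j) (hqj : q ≠ j) (hcq : c ≤ cross (v j' - v j) (v q - v j))
    (hbound : ∀ t ≤ 1, cross (v q - v j) ((billiardMap v lam)^[t] z - v j) ≤ m * c) :
    ∃ t < 2 * m + 2, (billiardMap v lam)^[t] z ∉ cone v j ∪ cone v j' := by
  by_contra! hstay
  have hfrom (t : ℕ) (ht : t ≤ 1) : (billiardMap v lam)^[t] z ∉ cone v j := fun hmem ↦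
    (hbound t ht).not_gt <| nat_mul_lt_cross_of_forall_mem_cones h0 h1 hc hjj' hqj hcq hmem
      fun s hs ↦ by
        rw [← Function.iterate_add_apply]
        exact hstay (s + t) (by omega)
  have hmem0 : z ∈ cone v j' := (hstay 0 (by omega)).resolve_left (hfrom 0 (by omega))
  have hmem1 : billiardMap v lam z ∈ cone v j' :=
    (hstay 1 (by omega)).resolve_left (hfrom 1 le_rfl)
  exact billiardMap_notMem_cone h0 hjj'.symm hmem0 hmem1

end Cones

/-! ### Polygons near a convex polygon -/

/-- Strict convexity with a quantitative margin: every vertex off a directed edge spans with that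
edge a parallelogram of signed area at least `c`. A single `c > 0` serves a whole neighbourhood of
a convex polygon. -/
def HasConvexityMargin {d : ℕ} [NeZero d] (c : ℝ) (v : Fin d → ℂ) : Prop :=
  ∀ i j : Fin d, j ≠ i → j ≠ i + 1 → c ≤ cross (v (i + 1) - v i) (v j - v i)

section Margin

variable {d : ℕ} [NeZero d] {v : Fin d → ℂ} {c : ℝ}

lemma HasConvexityMargin.isConvexPolygon (hc : 0 < c) (h : HasConvexityMargin c v) :
    IsConvexPolygon v := fun i j hji hji' ↦ hc.trans_le (h i j hji hji')

lemma IsConvexPolygon.exists_margin (h : IsConvexPolygon v) :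
    ∃ c > 0, ∀ᶠ w in nhds v, HasConvexityMargin c w := by
  have hlt : ∀ᶠ c in nhdsWithin (0 : ℝ) (Ioi 0), ∀ i j : Fin d, j ≠ i → j ≠ i + 1 →
      c < cross (v (i + 1) - v i) (v j - v i) := by
    simp only [eventually_all]
    exact fun i j hji hji' ↦
      eventually_nhdsWithin_of_eventually_nhds (eventually_lt_nhds (h i j hji hji'))
  obtain ⟨c, hc, hc0⟩ := (hlt.and self_mem_nhdsWithin).exists
  refine ⟨c, hc0, ?_⟩
  simp only [HasConvexityMargin, eventually_all]
  intro i j hji hji'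
  have hcont : Continuous fun w : Fin d → ℂ ↦ cross (w (i + 1) - w i) (w j - w i) := by
    unfold cross
    fun_prop
  exact (hcont.continuousAt.eventually_const_lt (hc i j hji hji')).mono fun _ ↦ le_of_lt

lemma exists_ne_ne_add_one (hd : 3 ≤ d) (j : Fin d) : ∃ q : Fin d, q ≠ j ∧ q ≠ j + 1 := by
  have hcard : ({j, j + 1} : Finset (Fin d)).card < (Finset.univ : Finset (Fin d)).card := by
    rw [Finset.card_fin]
    exact Finset.card_le_two.trans_lt (by omega)
  obtain ⟨q, hq⟩ := Finset.exists_mem_notMem_of_card_lt_card hcard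
  exact ⟨q, by simpa using hq.2⟩

lemma HasConvexityMargin.vertex_ne (hc : 0 < c) (h : HasConvexityMargin c v) (hd : 3 ≤ d)
    (j : Fin d) : v (j + 1) ≠ v j := fun heq ↦ by
  obtain ⟨q, hqj, hqj'⟩ := exists_ne_ne_add_one hd j
  have := h j q hqj hqj'
  rw [heq, sub_self] at this
  simp only [cross, Complex.zero_re, Complex.zero_im, zero_mul, sub_zero] at this
  exact this.not_gt hc

lemma cross_sub_le_of_norm_le {p q z : ℂ} {B r : ℝ} (hp : ‖p‖ ≤ B) (hq : ‖q‖ ≤ B)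
    (hz : ‖z‖ ≤ r) : cross (p - q) (z - q) ≤ (B + B) * (r + B) :=
  calc cross (p - q) (z - q) ≤ ‖p - q‖ * ‖z - q‖ := (le_abs_self _).trans (abs_cross_le _ _)
    _ ≤ (B + B) * (r + B) :=
      mul_le_mul (norm_sub_le_of_le hp hq) (norm_sub_le_of_le hz hq) (norm_nonneg _)
        (add_nonneg ((norm_nonneg p).trans hp) ((norm_nonneg p).trans hp))

lemma exists_visit_off_edge {vP : Fin d → ℂ} {lP ε : ℝ} (hd : 3 ≤ d) (hl0 : 0 ≤ lP - ε)
    (hl1 : lP + ε ≤ 1) (hc : 0 < c) (hmargin : ∀ w ∈ ball vP ε, HasConvexityMargin c w) :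
    ∃ S : ℕ, ∀ n, S ≤ n → ∀ i ∈ ItinSet vP lP ε n, ∀ j : Fin d,
      ∃ t : Fin n, n ≤ t + S ∧ i t ≠ j ∧ i t ≠ j + 1 := by
  set B := ‖vP‖ + ε
  set r := rEps vP lP ε
  obtain ⟨m, hm⟩ := exists_nat_ge ((B + B) * (r + B) / c)
  rw [div_le_iff₀ hc] at hm
  refine ⟨2 * m + 2, fun n hn i ⟨⟨w, lam⟩, ⟨hw, hlam⟩, z, hz⟩ j ↦ ?_⟩
  obtain ⟨q, hqj, hqj'⟩ := exists_ne_ne_add_one hd j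
  have hwB (l : Fin d) : ‖w l‖ ≤ B :=
    (norm_le_pi_norm w l).trans (norm_lt_of_mem_ball hw).le
  have hjj' : j + 1 ≠ j := fun h ↦ (hmargin w hw).vertex_ne hc hd j (congrArg w h)
  set T := billiardMap w lam
  set z' := T^[n - (2 * m + 2)] z
  have hvisit (t : ℕ) (ht : t < 2 * m + 2) :
      T^[t] z' ∈ cone w (i ⟨t + (n - (2 * m + 2)), by omega⟩) ∩ Keps vP lP ε := by
    rw [← Function.iterate_add_apply]
    exact hz ⟨t + (n - (2 * m + 2)), by omega⟩
  obtain ⟨t, ht, hout⟩ := exists_iterate_notMem_cones (v := w) (z := z') (m := m)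
    (hl0.trans hlam.1.le) (hlam.2.le.trans hl1) hc.le hjj' hqj (hmargin w hw j q hqj hqj')
    fun t ht ↦ (cross_sub_le_of_norm_le (hwB q) (hwB j)
      (mem_closedBall_zero_iff.mp (hvisit t (by omega)).2)).trans hm
  refine ⟨⟨t + (n - (2 * m + 2)), by omega⟩, ?_, fun h ↦ hout (.inl (h ▸ (hvisit t ht).1)),
    fun h ↦ hout (.inr (h ▸ (hvisit t ht).1))⟩
  change n ≤ t + (n - (2 * m + 2)) + (2 * m + 2)
  omega

lemma IsConvexPolygon.exists_radius {lP : ℝ} (h : IsConvexPolygon v) (hl : lP ∈ Ioo (0 : ℝ) 1) :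
    ∃ ε > 0, 0 < lP - ε ∧ lP + ε < 1 ∧
      ∃ c > 0, ∀ w ∈ ball v ε, HasConvexityMargin c w := by
  obtain ⟨c, hc, hmargin⟩ := h.exists_margin
  obtain ⟨δ, hδ, hball⟩ := eventually_nhds_iff_ball.mp hmargin
  obtain ⟨ε, hε, hε'⟩ := exists_between (lt_min hδ (lt_min hl.1 (sub_pos.mpr hl.2)))
  simp only [lt_min_iff] at hε'
  exact ⟨ε, hε, by linarith, by linarith, c, hc, fun w hw ↦
    hball w (ball_subset_ball hε'.1.le hw)⟩

end Margin

/-! ### Measure of strips -/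

lemma exists_rotation_cross (e : ℂ) :
    ∃ u : Circle, ∀ z, cross e z = ‖e‖ * (rotation u z).im := by
  refine ⟨(Circle.exp e.arg)⁻¹, fun z ↦ ?_⟩
  have hconj : (starRingEnd ℂ) e = ‖e‖ * ((Circle.exp e.arg)⁻¹ : Circle) := by
    conv_lhs => rw [← Complex.norm_mul_exp_arg_mul_I e]
    rw [map_mul, Complex.conj_ofReal, Circle.coe_inv_eq_conj, Circle.coe_exp]
  rw [cross_eq_im, hconj, rotation_apply, mul_assoc, Complex.im_ofReal_mul]

lemma volume_rectangle_le {x y a b : ℝ} (ha : 0 ≤ a) :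
    volume {z : ℂ | |z.re - x| ≤ a ∧ |z.im - y| ≤ b} ≤ ENNReal.ofReal (4 * a * b) := by
  have hpre : {z : ℂ | |z.re - x| ≤ a ∧ |z.im - y| ≤ b} =
      Complex.measurableEquivRealProd ⁻¹' (closedBall x a ×ˢ closedBall y b) := by
    ext z
    simp [Real.dist_eq]
  rw [hpre, Complex.volume_preserving_equiv_real_prod.measure_preimage
    (measurableSet_closedBall.prod measurableSet_closedBall).nullMeasurableSet,
    Measure.volume_eq_prod, Measure.prod_prod, Real.volume_closedBall, Real.volume_closedBall,
    ← ENNReal.ofReal_mul (by positivity)]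
  exact ENNReal.ofReal_le_ofReal (by linarith)

lemma abs_sub_neg_div_le {c y r η ρ : ℝ} (hη : 0 < η) (hc : η ≤ |c|) (h : |c * y + r| ≤ ρ) :
    |y - -r / c| ≤ ρ / η := by
  have hc0 : c ≠ 0 := abs_pos.mp (hη.trans_le hc)
  have hfactor : y - -r / c = (c * y + r) / c := by
    field_simp
    ring
  rw [hfactor, abs_div]
  exact div_le_div₀ ((abs_nonneg _).trans h) h hη hc

lemma volume_strip_le {e r z₀ : ℂ} {c η ρ ε : ℝ} (he : e ≠ 0) (hη : 0 < η) (hc : η ≤ |c|)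
    (hε : 0 ≤ ε) :
    volume {z ∈ ball z₀ ε | |cross e (c * z + r)| ≤ ‖e‖ * ρ} ≤
      ENNReal.ofReal (4 * ε * (ρ / η)) := by
  obtain ⟨u, hu⟩ := exists_rotation_cross e
  have hpre := (rotation u).measurePreserving.measure_preimage_emb
    (rotation u).toHomeomorph.measurableEmbedding {z : ℂ | |z.re - (rotation u z₀).re| ≤ ε ∧
      |z.im - -(rotation u r).im / c| ≤ ρ / η}
  refine ((measure_mono fun z hz ↦ ?_).trans_eq hpre).trans (volume_rectangle_le hε)
  obtain ⟨hz, hstrip⟩ := hz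
  refine ⟨?_, abs_sub_neg_div_le hη hc ?_⟩
  · calc |(rotation u z).re - (rotation u z₀).re| ≤ ‖rotation u (z - z₀)‖ := by
          rw [map_sub, ← Complex.sub_re]
          exact Complex.abs_re_le_norm _
      _ ≤ ε := by
          rw [LinearIsometryEquiv.norm_map]
          exact (mem_ball_iff_norm.mp hz).le
  · have him : (rotation u (c * z + r)).im = c * (rotation u z).im + (rotation u r).im := by
      simp only [map_add, Complex.add_im, rotation_apply]
      rw [mul_left_comm, Complex.im_ofReal_mul]
    rw [hu, abs_mul, abs_norm, him] at hstrip
    exact le_of_mul_le_mul_left hstrip (norm_pos_iff.mpr he)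

lemma measure_prod_le_of_slice_le {X Y : Type*} [MeasurableSpace X] [MeasurableSpace Y]
    {μ : Measure X} {ν : Measure Y} [SFinite μ] [SFinite ν] {A : Set (X × Y)} {t : Set Y}
    {K : ENNReal} (hA : MeasurableSet A) (ht : MeasurableSet t) (hAt : ∀ q ∈ A, q.2 ∈ t)
    (hK : ∀ y ∈ t, μ {x | (x, y) ∈ A} ≤ K) : μ.prod ν A ≤ K * ν t := by
  rw [Measure.prod_apply_symm hA, ← lintegral_indicator_const ht]
  refine lintegral_mono fun y ↦ ?_
  by_cases hy : y ∈ t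
  · rw [indicator_of_mem hy]
    exact hK y hy
  · have hempty : (fun x ↦ (x, y)) ⁻¹' A = ∅ :=
      eq_empty_of_forall_notMem fun x hx ↦ hy (hAt (x, y) hx)
    rw [hempty, measure_empty]
    exact zero_le

lemma update_mem_pi_univ {ι : Type*} [DecidableEq ι] {X : ι → Type*} {B : ∀ i, Set (X i)} {m : ι}
    {x : ∀ i, X i} {y z : X m} (h : Function.update x m y ∈ univ.pi B) (hz : z ∈ B m) :
    Function.update x m z ∈ univ.pi B := by
  rw [← Function.update_idem y z x]
  exact update_mem_pi_iff_of_mem h |>.mpr fun _ ↦ hz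

lemma measure_pi_le_of_update_le {ι : Type*} [Fintype ι] [DecidableEq ι] {X : ι → Type*}
    [∀ i, MeasurableSpace (X i)] {μ : ∀ i, Measure (X i)} [∀ i, SigmaFinite (μ i)]
    {A : Set (∀ i, X i)} {B : ∀ i, Set (X i)} {m : ι} {K : ENNReal} (hA : MeasurableSet A)
    (hB : ∀ i, MeasurableSet (B i)) (hAB : A ⊆ univ.pi B) (hBm : μ m (B m) ≠ 0)
    (hBm' : μ m (B m) ≠ ⊤) (hK : ∀ x ∈ A, μ m {y | Function.update x m y ∈ A} ≤ K) :
    Measure.pi μ A ≤ K / μ m (B m) * Measure.pi μ (univ.pi B) := by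
  have hbox : MeasurableSet (univ.pi B) := MeasurableSet.univ_pi hB
  rw [← lintegral_indicator_one hA, ← lintegral_indicator_const hbox]
  refine lintegral_le_of_lmarginal_le {m} (measurable_one.indicator hA)
    (measurable_const.indicator hbox) fun x ↦ ?_
  rw [lmarginal_singleton, lmarginal_singleton]
  beta_reduce
  have hslice : ∫⁻ y, A.indicator 1 (Function.update x m y) ∂μ m =
      μ m {y | Function.update x m y ∈ A} :=
    lintegral_indicator_one (measurable_update x hA)
  rw [hslice]
  by_cases hx : ∃ y, Function.update x m y ∈ A
  · obtain ⟨y, hy⟩ := hx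
    have hK' := hK _ hy
    simp only [Function.update_idem] at hK'
    calc μ m {y | Function.update x m y ∈ A} ≤ K := hK'
      _ = ∫⁻ z, (B m).indicator (fun _ ↦ K / μ m (B m)) z ∂μ m := by
        rw [lintegral_indicator_const (hB m), ENNReal.div_mul_cancel hBm hBm']
      _ ≤ _ := by
        refine lintegral_mono fun z ↦ ?_
        by_cases hz : z ∈ B m
        · rw [indicator_of_mem hz, indicator_of_mem (update_mem_pi_univ (hAB hy) hz)]
        · rw [indicator_of_notMem hz]
          exact zero_le
  · have hempty : {y | Function.update x m y ∈ A} = ∅ :=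
      eq_empty_of_forall_notMem fun y hy ↦ hx ⟨y, hy⟩
    rw [hempty, measure_empty]
    exact zero_le

/-! ### Itineraries ending near an edge -/

section Itineraries

variable {d n : ℕ} {i : Fin n → Fin d} {j j' m : Fin d} {vP : Fin d → ℂ} {lP ε : ℝ}

/-- The coefficient of the vertex `v m` in `H(P, λ, i) / (1 + λ)`, as a polynomial in `λ`. Its
coefficients are indexed backwards in time: the visit at time `t` contributes to
`λ ^ (n - t - 1)`. -/
def visitPolynomial (i : Fin n → Fin d) (m : Fin d) : Polynomial ℤ :=
  Polynomial.ofFn n fun s ↦ if i s.rev = m then (-1) ^ (s : ℕ) else 0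

lemma abs_coeff_visitPolynomial_le (i : Fin n → Fin d) (m : Fin d) (s : ℕ) :
    |((visitPolynomial i m).coeff s : ℝ)| ≤ 1 := by
  rw [visitPolynomial]
  by_cases hs : s < n
  · rw [Polynomial.ofFn_coeff_eq_val_of_lt _ hs]
    split_ifs <;> simp
  · simp [Polynomial.ofFn_coeff_eq_zero_of_ge _ (not_lt.mp hs)]

lemma coeff_visitPolynomial_ne_zero {t : Fin n} (ht : i t = m) :
    (visitPolynomial i m).coeff (t.rev : ℕ) ≠ 0 := by
  rw [visitPolynomial, Polynomial.ofFn_coeff_eq_val_of_lt _ t.rev.isLt, Fin.eta, Fin.rev_rev,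
    if_pos ht]
  exact pow_ne_zero _ (by norm_num)

lemma aeval_visitPolynomial (i : Fin n → Fin d) (m : Fin d) (x : ℝ) :
    Polynomial.aeval x (visitPolynomial i m) =
      ∑ t : Fin n, if i t = m then (-x) ^ (n - (t : ℕ) - 1) else 0 := by
  rw [visitPolynomial, Polynomial.ofFn_eq_sum_monomial, map_sum,
    ← Equiv.sum_comp Fin.revPerm]
  refine Finset.sum_congr rfl fun t _ ↦ ?_
  rw [Polynomial.aeval_monomial, Fin.revPerm_apply, Fin.rev_rev, Fin.val_rev, Nat.sub_add_eq]
  split_ifs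
  · rw [map_pow, map_neg, map_one, ← neg_pow]
  · rw [map_zero, zero_mul]

lemma Hpt_update (w : Fin d → ℂ) (x : ℝ) (i : Fin n → Fin d) (m : Fin d) (z : ℂ) :
    Hpt (Function.update w m z) x i =
      ((1 + x) * Polynomial.aeval x (visitPolynomial i m) : ℝ) * z +
        Hpt (Function.update w m 0) x i := by
  rw [aeval_visitPolynomial]
  push_cast
  rw [Hpt, Hpt, mul_assoc, ← mul_add, Finset.sum_mul, ← Finset.sum_add_distrib]
  congr 1
  refine Finset.sum_congr rfl fun t _ ↦ ?_
  by_cases h : i t = m <;> simp [h]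

/-- The parameters `(P, λ)` for which `H(P, λ, i)` lies within distance `ρ` of the line through two
given vertices. The distance is expressed by a cross product, which is affine in each of the other
vertices. -/
def edgeStrip (i : Fin n → Fin d) (j j' : Fin d) (ρ : ℝ) : Set ((Fin d → ℂ) × ℝ) :=
  {q | |cross (q.1 j' - q.1 j) (Hpt q.1 q.2 i - q.1 j)| ≤ ‖q.1 j' - q.1 j‖ * ρ}

lemma measurableSet_edgeStrip (i : Fin n → Fin d) (j j' : Fin d) (ρ : ℝ) :
    MeasurableSet (edgeStrip i j j' ρ) := by
  refine (isClosed_le ?_ (by fun_prop)).measurableSet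
  unfold cross Hpt
  fun_prop

lemma abs_cross_sub_le_infDist (p q z : ℂ) :
    |cross (q - p) (z - p)| ≤ ‖q - p‖ * infDist z (affineSpan ℝ ({p, q} : Set ℂ) : Set ℂ) := by
  obtain ⟨y, hy, hdist⟩ :=
    (AffineSubspace.closed_of_finiteDimensional (affineSpan ℝ {p, q})).exists_infDist_eq_dist
      ⟨p, left_mem_affineSpan_pair ℝ p q⟩ z
  obtain ⟨s, rfl⟩ := mem_affineSpan_pair_iff_exists_lineMap_eq.mp hy
  have hcross : cross (q - p) (z - p) = cross (q - p) (z - AffineMap.lineMap p q s) := by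
    simp only [cross, AffineMap.lineMap_apply, vsub_eq_sub, vadd_eq_add, Complex.sub_re,
      Complex.sub_im, Complex.add_re, Complex.add_im, Complex.smul_re, Complex.smul_im, smul_eq_mul]
    ring
  rw [hdist, dist_eq_norm, hcross]
  exact abs_cross_le _ _

lemma setOf_infDist_lt_subset_edgeStrip (i : Fin n → Fin d) (j j' : Fin d) (ρ : ℝ) :
    {q | infDist (Hpt q.1 q.2 i) (affineSpan ℝ ({q.1 j, q.1 j'} : Set ℂ) : Set ℂ) < ρ} ⊆
      edgeStrip i j j' ρ := fun _ hq ↦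
  (abs_cross_sub_le_infDist _ _ _).trans
    (mul_le_mul_of_nonneg_left (mem_ofPred_eq ▸ hq).le (norm_nonneg _))

lemma volume_update_mem_edgeStrip_le {w : Fin d → ℂ} {z₀ : ℂ} {x η ρ : ℝ} (hmj : m ≠ j)
    (hmj' : m ≠ j') (hne : w j' ≠ w j) (hx : 0 ≤ x) (hη : 0 < η)
    (hp : η ≤ |Polynomial.aeval x (visitPolynomial i m)|) (hε : 0 ≤ ε) :
    volume {z ∈ ball z₀ ε | (Function.update w m z, x) ∈ edgeStrip i j j' ρ} ≤
      ENNReal.ofReal (4 * ε * (ρ / η)) := by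
  have hcoeff : η ≤ |(1 + x) * Polynomial.aeval x (visitPolynomial i m)| := by
    rw [abs_mul, abs_of_nonneg (by positivity)]
    exact hp.trans (le_mul_of_one_le_left (abs_nonneg _) (by linarith))
  have hstrip := volume_strip_le (z₀ := z₀) (r := Hpt (Function.update w m 0) x i - w j) (ρ := ρ)
    (sub_ne_zero.mpr hne) hη hcoeff hε
  refine (measure_mono fun z hz ↦ ?_).trans hstrip
  refine ⟨hz.1, ?_⟩
  rw [← add_sub_assoc, ← Hpt_update]
  simpa only [edgeStrip, mem_ofPred_eq, Function.update_of_ne hmj.symm,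
    Function.update_of_ne hmj'.symm] using hz.2

lemma volume_slice_edgeStrip_le {x η ρ : ℝ} (hmj : m ≠ j) (hmj' : m ≠ j')
    (hne : ∀ w ∈ ball vP ε, w j' ≠ w j) (hx : 0 ≤ x) (hη : 0 < η)
    (hp : η ≤ |Polynomial.aeval x (visitPolynomial i m)|) (hε : 0 < ε) :
    volume {w ∈ ball vP ε | (w, x) ∈ edgeStrip i j j' ρ} ≤
      ENNReal.ofReal (4 * ε * (ρ / η)) / volume (ball (vP m) ε) * volume (ball vP ε) := by
  set A := {w ∈ ball vP ε | (w, x) ∈ edgeStrip i j j' ρ}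
  have hA : MeasurableSet A :=
    measurableSet_ball.inter (measurable_prodMk_right (measurableSet_edgeStrip i j j' ρ))
  have hpi := ball_pi vP hε
  have hbox : A ⊆ univ.pi fun l ↦ ball (vP l) ε := hpi ▸ fun w hw ↦ hw.1
  have hslice : ∀ w ∈ A, volume {z | Function.update w m z ∈ A} ≤
      ENNReal.ofReal (4 * ε * (ρ / η)) := by
    intro w hw
    have hsub : {z | Function.update w m z ∈ A} ⊆
        {z ∈ ball (vP m) ε | (Function.update w m z, x) ∈ edgeStrip i j j' ρ} := fun z hz ↦
      ⟨by simpa using (dist_le_pi_dist _ _ m).trans_lt hz.1, hz.2⟩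
    exact (measure_mono hsub).trans
      (volume_update_mem_edgeStrip_le hmj hmj' (hne w hw.1) hx hη hp hε.le)
  rw [hpi]
  exact measure_pi_le_of_update_le (X := fun _ ↦ ℂ) (B := fun l ↦ ball (vP l) ε) hA
    (fun _ ↦ measurableSet_ball) hbox (measure_ball_pos _ _ hε).ne' measure_ball_lt_top.ne hslice

lemma measurableSet_Delta (vP : Fin d → ℂ) (lP ε : ℝ) : MeasurableSet (Delta vP lP ε) :=
  measurableSet_ball.prod measurableSet_Ioo

lemma volume_edgeStrip_of_le_aeval_le {η ρ : ℝ} (hmj : m ≠ j) (hmj' : m ≠ j')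
    (hne : ∀ w ∈ ball vP ε, w j' ≠ w j) (hl0 : 0 ≤ lP - ε) (hη : 0 < η) (hε : 0 < ε) :
    volume {q ∈ Delta vP lP ε | η ≤ |Polynomial.aeval q.2 (visitPolynomial i m)| ∧
        q ∈ edgeStrip i j j' ρ} ≤
      ENNReal.ofReal (4 * ε * (ρ / η)) / volume (ball (vP m) ε) * volume (ball vP ε) *
        ENNReal.ofReal (2 * ε) := by
  have hclosed : IsClosed {q : (Fin d → ℂ) × ℝ |
      η ≤ |Polynomial.aeval q.2 (visitPolynomial i m)|} :=
    isClosed_le continuous_const (by fun_prop)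
  have hmeas := (measurableSet_Delta vP lP ε).inter
    (hclosed.measurableSet.inter (measurableSet_edgeStrip i j j' ρ))
  have hIoo : volume (Ioo (lP - ε) (lP + ε)) = ENNReal.ofReal (2 * ε) := by
    rw [Real.volume_Ioo]
    ring_nf
  rw [← hIoo]
  refine measure_prod_le_of_slice_le hmeas measurableSet_Ioo (fun q hq ↦ hq.1.2) fun x hx ↦ ?_
  by_cases hp : η ≤ |Polynomial.aeval x (visitPolynomial i m)|
  · refine le_trans (measure_mono fun w hw ↦ ?_)
      (volume_slice_edgeStrip_le hmj hmj' hne (hl0.trans hx.1.le) hη hp hε)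
    exact ⟨hw.1.1, hw.2.2⟩
  · exact (measure_mono_null (fun w hw ↦ hp hw.2.1) measure_empty).trans_le zero_le

lemma exists_volume_edgeStrip_of_le_aeval_le (vP : Fin d → ℂ) (hε : 0 < ε) (hl0 : 0 ≤ lP - ε) :
    ∃ C > 0, ∀ {n : ℕ} (i : Fin n → Fin d) {m j j' : Fin d}, m ≠ j → m ≠ j' →
      (∀ w ∈ ball vP ε, w j' ≠ w j) → ∀ η > 0, ∀ ρ,
        volume {q ∈ Delta vP lP ε | η ≤ |Polynomial.aeval q.2 (visitPolynomial i m)| ∧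
          q ∈ edgeStrip i j j' ρ} ≤ ENNReal.ofReal (C * (ρ / η)) := by
  set V := volume.real (ball vP ε)
  set V₀ := volume.real (ball (0 : ℂ) ε)
  have hV : 0 < V := ENNReal.toReal_pos (measure_ball_pos _ _ hε).ne' measure_ball_lt_top.ne
  have hV₀ : 0 < V₀ := ENNReal.toReal_pos (measure_ball_pos _ _ hε).ne' measure_ball_lt_top.ne
  refine ⟨4 * ε / V₀ * V * (2 * ε), by positivity, fun i m j j' hmj hmj' hne η hη ρ ↦ ?_⟩
  refine (volume_edgeStrip_of_le_aeval_le hmj hmj' hne hl0 hη hε).trans_eq ?_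
  rw [Measure.addHaar_ball_center, ← ofReal_measureReal (s := ball vP ε) measure_ball_lt_top.ne,
    ← ofReal_measureReal (s := ball (0 : ℂ) ε) measure_ball_lt_top.ne,
    ← ENNReal.ofReal_div_of_pos hV₀, ← ENNReal.ofReal_mul' hV.le,
    ← ENNReal.ofReal_mul' (by positivity)]
  congr 1
  ring

lemma exists_volume_aeval_visitPolynomial_le (vP : Fin d → ℂ) (hε : 0 < ε) (hl0 : 0 < lP - ε)
    (hl1 : lP + ε < 1) (S : ℕ) :
    ∃ k : ℕ, 1 ≤ k ∧ ∃ C > 0, ∀ {n : ℕ} (i : Fin n → Fin d) (t : Fin n), n ≤ t + S → ∀ η > 0,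
      volume {q ∈ Delta vP lP ε | |Polynomial.aeval q.2 (visitPolynomial i (i t))| ≤ η} ≤
        ENNReal.ofReal (C * η ^ (k : ℝ)⁻¹) := by
  obtain ⟨k, hk, C, hC, hsublevel⟩ := exists_volume_polynomial_sublevel_le hl0
    (show lP - ε < lP + ε by linarith) hl1 zero_lt_one S
  have hV : 0 < volume.real (ball vP ε) :=
    ENNReal.toReal_pos (measure_ball_pos _ _ hε).ne' measure_ball_lt_top.ne
  refine ⟨k, hk, volume.real (ball vP ε) * C, by positivity, fun {n} i t ht η hη ↦ ?_⟩
  set p := visitPolynomial i (i t)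
  have hcoeff : ∃ s ≤ S, p.coeff s ≠ 0 :=
    ⟨t.rev, by rw [Fin.val_rev]; omega, coeff_visitPolynomial_ne_zero rfl⟩
  have hsub : {q ∈ Delta vP lP ε | |Polynomial.aeval q.2 p| ≤ η} ⊆
      ball vP ε ×ˢ {x ∈ Ioo (lP - ε) (lP + ε) | |Polynomial.aeval x p| ≤ η} :=
    fun q hq ↦ ⟨hq.1.1, hq.1.2, hq.2⟩
  calc volume {q ∈ Delta vP lP ε | |Polynomial.aeval q.2 p| ≤ η}
      ≤ volume (ball vP ε) * volume {x ∈ Ioo (lP - ε) (lP + ε) | |Polynomial.aeval x p| ≤ η} := by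
        rw [← Measure.prod_prod]
        exact measure_mono hsub
    _ ≤ volume (ball vP ε) * ENNReal.ofReal (C * η ^ (k : ℝ)⁻¹) := by
        gcongr
        exact hsublevel p (abs_coeff_visitPolynomial_le i (i t)) hcoeff η hη
    _ = ENNReal.ofReal (volume.real (ball vP ε) * C * η ^ (k : ℝ)⁻¹) := by
        rw [mul_assoc, ENNReal.ofReal_mul hV.le, ofReal_measureReal measure_ball_lt_top.ne]

lemma exists_volume_edgeStrip_le (vP : Fin d → ℂ) (hε : 0 < ε) (hl0 : 0 < lP - ε)
    (hl1 : lP + ε < 1) (S : ℕ) :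
    ∃ k : ℕ, 1 ≤ k ∧ ∃ C > 0, ∀ {n : ℕ} (i : Fin n → Fin d) {j j' : Fin d},
      (∀ w ∈ ball vP ε, w j' ≠ w j) → (∃ t : Fin n, n ≤ t + S ∧ i t ≠ j ∧ i t ≠ j') → ∀ ρ > 0,
        volume (Delta vP lP ε ∩ edgeStrip i j j' ρ) ≤ ENNReal.ofReal (C * ρ ^ (k : ℝ)⁻¹) := by
  obtain ⟨k, hk, C, hC, hsmall⟩ := exists_volume_aeval_visitPolynomial_le vP hε hl0 hl1 S
  obtain ⟨C', hC', hlarge⟩ := exists_volume_edgeStrip_of_le_aeval_le vP hε hl0.le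
  refine ⟨k + 1, by omega, C + C', by positivity, fun {n} i j j' hne ⟨t, ht, htj, htj'⟩ ρ hρ ↦ ?_⟩
  -- With `ρ = X ^ (k + 1)` the threshold `X ^ k` makes both contributions of order `X`.
  set X := ρ ^ ((k + 1 : ℕ) : ℝ)⁻¹
  have hX : 0 < X := Real.rpow_pos_of_pos hρ _
  have hρX : ρ / X ^ k = X := by
    rw [div_eq_iff (by positivity), ← pow_succ', Real.rpow_inv_natCast_pow hρ.le (by omega)]
  have hη : 0 < X ^ k := by positivity
  calc volume (Delta vP lP ε ∩ edgeStrip i j j' ρ)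
      ≤ volume {q ∈ Delta vP lP ε | |Polynomial.aeval q.2 (visitPolynomial i (i t))| ≤ X ^ k} +
        volume {q ∈ Delta vP lP ε | X ^ k ≤ |Polynomial.aeval q.2 (visitPolynomial i (i t))| ∧
          q ∈ edgeStrip i j j' ρ} :=
        (measure_mono fun q hq ↦ (le_total _ _).imp (⟨hq.1, ·⟩) (⟨hq.1, ·, hq.2⟩)).trans
          (measure_union_le _ _)
    _ ≤ ENNReal.ofReal (C * (X ^ k) ^ (k : ℝ)⁻¹) + ENNReal.ofReal (C' * (ρ / X ^ k)) :=
        add_le_add (hsmall i t ht _ hη) (hlarge i htj htj' hne _ hη ρ)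
    _ = ENNReal.ofReal ((C + C') * X) := by
        rw [Real.pow_rpow_inv_natCast hX.le (by omega), hρX,
          ← ENNReal.ofReal_add (by positivity) (by positivity), add_mul]

end Itineraries

lemma two_mul_rEps_mul_aEps_pow_nonneg {d : ℕ} (vP : Fin d → ℂ) {lP ε : ℝ}
    (ha : 0 ≤ aEps lP ε) (n : ℕ) : 0 ≤ 2 * rEps vP lP ε * aEps lP ε ^ n := by
  have hb : 0 ≤ bEps vP ε := Real.sSup_nonneg (forall_mem_image.mpr fun w _ ↦ norm_nonneg w)
  rw [rEps]
  positivity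

lemma mul_rpow_le_mul_natCast_pow_mul_rpow {C ρ : ℝ} (hC : 0 ≤ C) (hρ : 0 ≤ ρ) {n : ℕ}
    (hn : 1 ≤ n) (p : ℕ) (s : ℝ) : C * ρ ^ s ≤ C * (n : ℝ) ^ p * ρ ^ s := by
  gcongr
  exact le_mul_of_one_le_right hC (one_le_pow₀ (Nat.one_le_cast.mpr hn))

theorem measure_Omega_estimate_general (d : ℕ) [NeZero d] (hd : 3 ≤ d) (vP : Fin d → ℂ)
    (lP : ℝ) (hconv : IsConvexPolygon vP) (hl : lP ∈ Set.Ioo (0 : ℝ) 1) :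
    ∃ ε : ℝ, 0 < ε ∧ 0 < lP - ε ∧ lP + ε < 1 ∧
      (∀ w : Fin d → ℂ, ‖w - vP‖ < ε → IsConvexPolygon w) ∧
      ∃ k : ℕ, 1 ≤ k ∧ ∃ N : ℕ, 0 < N ∧ ∃ C : ℝ, 0 < C ∧
        ∀ n : ℕ, N < n → ∀ i ∈ ItinSet vP lP ε n, ∀ j : Fin d, ∀ ρ : ℝ, 0 ≤ ρ →
          volume {q ∈ Delta vP lP ε |
              Metric.infDist (Hpt q.1 q.2 i)
                  (affineSpan ℝ ({q.1 j, q.1 (j + 1)} : Set ℂ) : Set ℂ) < ρ} ≤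
            ENNReal.ofReal (C * ρ ^ ((k : ℝ)⁻¹)) := by
  obtain ⟨ε, hε, hl0, hl1, c, hc, hmargin⟩ := hconv.exists_radius hl
  obtain ⟨S, hS⟩ := exists_visit_off_edge hd hl0.le hl1.le hc hmargin
  obtain ⟨k, hk, C, hC, hstrip⟩ := exists_volume_edgeStrip_le vP hε hl0 hl1 S
  refine ⟨ε, hε, hl0, hl1, fun w hw ↦ (hmargin w (mem_ball_iff_norm.mpr hw)).isConvexPolygon hc,
    k, hk, S + 1, by omega, C, hC, fun n hn i hi j ρ hρ ↦ ?_⟩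
  rcases hρ.eq_or_lt with rfl | hρ
  · exact (measure_mono_null (fun q hq ↦ infDist_nonneg.not_gt hq.2) measure_empty).trans_le zero_le
  · exact (measure_mono (inter_subset_inter_right _
      (setOf_infDist_lt_subset_edgeStrip i j (j + 1) ρ))).trans
      (hstrip i (fun w hw ↦ (hmargin w hw).vertex_ne hc hd j) (hS n (by omega) i hi j) ρ hρ)

/-- Main measure estimate: if `P'` is in general position, there exist `ε > 0` and
`k ≥ 1`, `N > 0`, `C > 0` such that for every `n > N`, `i ∈ I_n^ε` and side index `j`,
the measure of the set of `(P,λ) ∈ Δ_ε` with `H(P,λ,i)` within distance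
`ρ_n = 2 r_ε a_ε^n` of the line `L_j(P)` through `v_j, v_{j+1}` is at most
`C n^(2(k+1)) ρ_n^(1/k)`. -/
theorem measure_Omega_estimate (d : ℕ) [NeZero d] (hd : 3 ≤ d) (vP : Fin d → ℂ)
    (lP : ℝ) (hconv : IsConvexPolygon vP) (hgen : GeneralPosition vP)
    (hl : lP ∈ Set.Ioo (0 : ℝ) 1) :
    ∃ ε : ℝ, 0 < ε ∧ 0 < lP - ε ∧ lP + ε < 1 ∧
      (∀ w : Fin d → ℂ, ‖w - vP‖ < ε → IsConvexPolygon w) ∧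
      ∃ k : ℕ, 1 ≤ k ∧ ∃ N : ℕ, 0 < N ∧ ∃ C : ℝ, 0 < C ∧
        ∀ n : ℕ, N < n → ∀ i ∈ ItinSet vP lP ε n, ∀ j : Fin d,
          volume {q ∈ Delta vP lP ε |
              Metric.infDist (Hpt q.1 q.2 i)
                  (affineSpan ℝ ({q.1 j, q.1 (j + 1)} : Set ℂ) : Set ℂ) <
                2 * rEps vP lP ε * aEps lP ε ^ n} ≤
            ENNReal.ofReal (C * (n : ℝ) ^ (2 * (k + 1)) *
              (2 * rEps vP lP ε * aEps lP ε ^ n) ^ ((k : ℝ)⁻¹)) := by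
  obtain ⟨ε, hε, hl0, hl1, hpoly, k, hk, N, hN, C, hC, hbound⟩ :=
    measure_Omega_estimate_general d hd vP lP hconv hl
  have hρ := two_mul_rEps_mul_aEps_pow_nonneg vP (lP := lP) (ε := ε) (add_pos hl.1 hε).le
  exact ⟨ε, hε, hl0, hl1, hpoly, k, hk, N, hN, C, hC, fun n hn i hi j ↦
    (hbound n hn i hi j _ (hρ n)).trans (ENNReal.ofReal_le_ofReal
      (mul_rpow_le_mul_natCast_pow_mul_rpow hC.le (hρ n) (hN.trans hn) _ _))⟩
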